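/- arXiv:1704.07288 — 2 statements merged into one kernel-verified Lean document; each statement's English description precedes it below -/
import Mathlib

section
/- Let N ≥ 1, let m_1, …, m_N be positive reals and let η_1, …, η_N be pairwise distinct positive reals. For (x,t) ∈ ℝ × ℝ define the N×N real matrix G(x,t) by G_{ij}(x,t) = (√(m_i·m_j)/(η_i + η_j))·e^{−(η_i+η_j)x − (η_i³+η_j³)t}, so that det(I + G(x,t)) > 0 for all (x,t). Then the function u(x,t) := 2·∂_x²(log det(I + G(x,t))) is smooth and solves the KdV equation u_t = (3/2)·u·u_x + (1/4)·u_{xxx} at every point of ℝ × ℝ (the N-soliton solution). -/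
open Real Matrix

/-- Partial derivative in the first (space) variable. -/
noncomputable def pderivX (f : ℝ × ℝ → ℝ) : ℝ × ℝ → ℝ :=
  fun p => deriv (fun x => f (x, p.2)) p.1

/-- Partial derivative in the second (time) variable. -/
noncomputable def pderivT (f : ℝ × ℝ → ℝ) : ℝ × ℝ → ℝ :=
  fun p => deriv (fun t => f (p.1, t)) p.2

/-!
Write `wₖ` for the vector `ηᵢᵏ √mᵢ exp (-ηᵢ x - ηᵢ³ t)`. Since `∂ₓG = -w₀ w₀ᵀ`, Jacobi's formula
gives `∂ₓ log det (I + G) = -a₀₀`, where `aⱼₖ = wⱼᵀ (I + G)⁻¹ wₖ`. Both `∂ₓG` and `∂ₜG` are sums of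
dyads `wⱼ wₖᵀ`, so the `x`- and `t`-derivatives of the moments `aⱼₖ` are polynomials in moments. The
displacement identity `[diag (ηᵢ²), G] = w₁ w₀ᵀ - w₀ w₁ᵀ` yields the one further relation
`a₀₃ - a₁₂ = a₀₁² - a₀₀ a₁₁`, which is exactly what makes `w = a₀₀` satisfy the potential KdV
equation `4 w_t = w_xxx - 6 w_x²`. Differentiating it in `x` gives KdV for `u = -2 w_x`.
-/

open Filter
open scoped Topology ContDiff

namespace KdV

section PartialDerivatives

variable {f g : ℝ × ℝ → ℝ} {p : ℝ × ℝ} {n k : ℕ∞ω}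

lemma pderivX_eventuallyEq (h : f =ᶠ[𝓝 p] g) : pderivX f =ᶠ[𝓝 p] pderivX g := by
  filter_upwards [h.eventuallyEq_nhds] with q hq
  have hline : Tendsto (fun x => (x, q.2)) (𝓝 q.1) (𝓝 q) :=
    Continuous.tendsto' (by fun_prop) _ _ rfl
  exact (hq.comp_tendsto hline).deriv_eq

lemma pderivT_eventuallyEq (h : f =ᶠ[𝓝 p] g) : pderivT f =ᶠ[𝓝 p] pderivT g := by
  filter_upwards [h.eventuallyEq_nhds] with q hq
  have hline : Tendsto (fun t => (q.1, t)) (𝓝 q.2) (𝓝 q) :=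
    Continuous.tendsto' (by fun_prop) _ _ rfl
  exact (hq.comp_tendsto hline).deriv_eq

lemma pderivX_const_mul (c : ℝ) (f : ℝ × ℝ → ℝ) :
    pderivX (fun q => c * f q) = fun q => c * pderivX f q :=
  funext fun _ => deriv_const_mul_field c

lemma pderivT_const_mul (c : ℝ) (f : ℝ × ℝ → ℝ) :
    pderivT (fun q => c * f q) = fun q => c * pderivT f q :=
  funext fun _ => deriv_const_mul_field c

lemma pderivX_eq_fderiv (hf : DifferentiableAt ℝ f p) : pderivX f p = fderiv ℝ f p (1, 0) :=
  (hf.hasFDerivAt.comp_hasDerivAt p.1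
    ((hasDerivAt_id p.1).prodMk (hasDerivAt_const p.1 p.2))).deriv

lemma pderivT_eq_fderiv (hf : DifferentiableAt ℝ f p) : pderivT f p = fderiv ℝ f p (0, 1) :=
  (hf.hasFDerivAt.comp_hasDerivAt p.2
    ((hasDerivAt_const p.2 p.1).prodMk (hasDerivAt_id p.2))).deriv

lemma hasDerivAt_pderivX (hf : DifferentiableAt ℝ f p) :
    HasDerivAt (fun x => f (x, p.2)) (pderivX f p) p.1 :=
  DifferentiableAt.hasDerivAt (hf.comp (g := f) p.1 (by fun_prop))

lemma eventually_differentiableAt (hf : ContDiffAt ℝ n f p) (hn : 1 ≤ n) :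
    ∀ᶠ q in 𝓝 p, DifferentiableAt ℝ f q :=
  ((hf.of_le hn).eventually (by simp)).mono fun _ hq => hq.differentiableAt one_ne_zero

lemma pderivX_eventuallyEq_fderiv (hf : ContDiffAt ℝ n f p) (hn : 1 ≤ n) :
    pderivX f =ᶠ[𝓝 p] fun q => fderiv ℝ f q (1, 0) :=
  (eventually_differentiableAt hf hn).mono fun _ => pderivX_eq_fderiv

lemma pderivT_eventuallyEq_fderiv (hf : ContDiffAt ℝ n f p) (hn : 1 ≤ n) :
    pderivT f =ᶠ[𝓝 p] fun q => fderiv ℝ f q (0, 1) :=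
  (eventually_differentiableAt hf hn).mono fun _ => pderivT_eq_fderiv

lemma contDiffAt_pderivX (hf : ContDiffAt ℝ n f p) (hk : k + 1 ≤ n) :
    ContDiffAt ℝ k (pderivX f) p :=
  ((hf.fderiv_right hk).clm_apply contDiffAt_const).congr_of_eventuallyEq
    (pderivX_eventuallyEq_fderiv hf (le_add_self.trans hk))

lemma pderivT_pderivX_comm (hf : ContDiffAt ℝ 2 f p) :
    pderivT (pderivX f) p = pderivX (pderivT f) p := by
  have hsymm : IsSymmSndFDerivAt ℝ f p := hf.isSymmSndFDerivAt (by simp)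
  have hf' : DifferentiableAt ℝ (fderiv ℝ f) p :=
    (hf.fderiv_right (m := 1) (by norm_num)).differentiableAt one_ne_zero
  have hsnd (v w : ℝ × ℝ) :
      fderiv ℝ (fun q => fderiv ℝ f q v) p w = fderiv ℝ (fderiv ℝ f) p w v := by
    simp [fderiv_clm_apply hf' (differentiableAt_const v)]
  have hdir (v : ℝ × ℝ) : DifferentiableAt ℝ (fun q => fderiv ℝ f q v) p :=
    hf'.clm_apply (differentiableAt_const v)
  rw [(pderivT_eventuallyEq (pderivX_eventuallyEq_fderiv hf (by norm_num))).eq_of_nhds,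
    (pderivX_eventuallyEq (pderivT_eventuallyEq_fderiv hf (by norm_num))).eq_of_nhds,
    pderivT_eq_fderiv (hdir _), pderivX_eq_fderiv (hdir _), hsnd, hsnd, hsymm]

end PartialDerivatives

section PotentialForm

/-- The KdV equation `u_t = (3/2) u u_x + (1/4) u_xxx` at a point. -/
def SolvesKdVAt (u : ℝ × ℝ → ℝ) (p : ℝ × ℝ) : Prop :=
  pderivT u p = 3 / 2 * u p * pderivX u p + 1 / 4 * pderivX (pderivX (pderivX u)) p

/-- The once-integrated KdV equation `4 w_t = w_xxx - 6 w_x²` at a point, for the potential `w`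
normalised by `u = -2 w_x`. -/
def SolvesPotentialKdVAt (w : ℝ × ℝ → ℝ) (p : ℝ × ℝ) : Prop :=
  4 * pderivT w p = pderivX (pderivX (pderivX w)) p - 6 * pderivX w p ^ 2

variable {u v w : ℝ × ℝ → ℝ} {p : ℝ × ℝ}

lemma SolvesKdVAt.congr_of_eventuallyEq (hv : SolvesKdVAt v p) (h : u =ᶠ[𝓝 p] v) :
    SolvesKdVAt u p := by
  have hx := pderivX_eventuallyEq h
  have hxxx := pderivX_eventuallyEq (pderivX_eventuallyEq hx)
  unfold SolvesKdVAt
  rw [(pderivT_eventuallyEq h).eq_of_nhds, h.eq_of_nhds, hx.eq_of_nhds, hxxx.eq_of_nhds]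
  exact hv

lemma solvesKdVAt_of_potential (hw : ContDiffAt ℝ 4 w p)
    (hpot : ∀ᶠ q in 𝓝 p, SolvesPotentialKdVAt w q) :
    SolvesKdVAt (fun q => -2 * pderivX w q) p := by
  have hwx : ContDiffAt ℝ 3 (pderivX w) p := contDiffAt_pderivX hw (by norm_num)
  have hwxx : ContDiffAt ℝ 2 (pderivX (pderivX w)) p := contDiffAt_pderivX hwx (by norm_num)
  have hwxxx : ContDiffAt ℝ 1 (pderivX (pderivX (pderivX w))) p :=
    contDiffAt_pderivX hwxx (by norm_num)
  have hpot_x : 4 * pderivX (pderivT w) p =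
      pderivX (pderivX (pderivX (pderivX w))) p - 12 * pderivX w p * pderivX (pderivX w) p := by
    rw [← congrFun (pderivX_const_mul 4 (pderivT w)) p, (pderivX_eventuallyEq hpot).eq_of_nhds]
    have hd := (hasDerivAt_pderivX (hwxxx.differentiableAt one_ne_zero)).sub
      (((hasDerivAt_pderivX (hwx.differentiableAt three_ne_zero)).pow 2).const_mul 6)
    refine (hd.congr_deriv ?_).deriv
    simp only [Nat.cast_ofNat, Nat.add_one_sub_one, pow_one, Prod.mk.eta]
    ring
  unfold SolvesKdVAt
  simp only [pderivX_const_mul, pderivT_const_mul]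
  rw [pderivT_pderivX_comm (hw.of_le (by norm_num))]
  linear_combination (-1 / 2) * hpot_x

end PotentialForm

lemma dotProduct_mul_vecMulVec_mul_mulVec {R k l m n : Type*} [CommSemiring R] [Fintype k]
    [Fintype l] [Fintype m] [Fintype n] (v : k → R) (M : Matrix k l R) (a : l → R) (b : m → R)
    (M' : Matrix m n R) (w : n → R) :
    v ⬝ᵥ (M * vecMulVec a b * M') *ᵥ w = (v ⬝ᵥ M *ᵥ a) * (b ⬝ᵥ M' *ᵥ w) := by
  rw [mul_vecMulVec, vecMulVec_mul, vecMulVec_mulVec, dotProduct_smul, dotProduct_mulVec b,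
    op_smul_eq_mul]

section MatrixDerivative

variable {𝕜 m n : Type*} [NontriviallyNormedField 𝕜] {s : 𝕜}

lemma hasDerivAt_dotProduct [Fintype n] {v w : 𝕜 → n → 𝕜} {v' w' : n → 𝕜}
    (hv : HasDerivAt v v' s) (hw : HasDerivAt w w' s) :
    HasDerivAt (fun r => v r ⬝ᵥ w r) (v' ⬝ᵥ w s + v s ⬝ᵥ w') s := by
  simp only [dotProduct, ← Finset.sum_add_distrib]
  exact HasDerivAt.fun_sum fun i _ => (hasDerivAt_pi.1 hv i).mul (hasDerivAt_pi.1 hw i)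

lemma hasDerivAt_matrix [Finite m] [Finite n] {A : 𝕜 → Matrix m n 𝕜} {A' : Matrix m n 𝕜} :
    HasDerivAt A A' s ↔ ∀ i j, HasDerivAt (fun r => A r i j) (A' i j) s := by
  have := Fintype.ofFinite m
  have := Fintype.ofFinite n
  exact (hasDerivAt_pi (E' := fun _ : m => n → 𝕜)).trans (forall_congr' fun _ => hasDerivAt_pi)

lemma hasDerivAt_matrix_const_add [Finite m] [Finite n] {A : 𝕜 → Matrix m n 𝕜}
    {A' : Matrix m n 𝕜} (B : Matrix m n 𝕜) (hA : HasDerivAt A A' s) :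
    HasDerivAt (fun r => B + A r) A' s :=
  hasDerivAt_matrix.2 fun i j => (hasDerivAt_matrix.1 hA i j).const_add (B i j)

lemma hasDerivAt_mulVec [Finite m] [Fintype n] {A : 𝕜 → Matrix m n 𝕜} {A' : Matrix m n 𝕜}
    {v : 𝕜 → n → 𝕜} {v' : n → 𝕜} (hA : HasDerivAt A A' s) (hv : HasDerivAt v v' s) :
    HasDerivAt (fun r => A r *ᵥ v r) (A' *ᵥ v s + A s *ᵥ v') s := by
  have := Fintype.ofFinite m
  exact hasDerivAt_pi.2 fun i =>
    hasDerivAt_dotProduct (hasDerivAt_pi.2 (hasDerivAt_matrix.1 hA i)) hv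

variable [Fintype n] [DecidableEq n] {A : 𝕜 → Matrix n n 𝕜} {A' : Matrix n n 𝕜}

lemma hasDerivAt_det (hA : HasDerivAt A A' s) :
    HasDerivAt (fun r => (A r).det) ((A s).adjugate * A').trace s := by
  let D : ContinuousMultilinearMap 𝕜 (fun _ : n => n → 𝕜) 𝕜 :=
    { (Matrix.detRowAlternating (n := n) (R := 𝕜)).toMultilinearMap with
      cont := continuous_id.matrix_det }
  have hrows : HasDerivAt (fun r => (A r).det) (∑ i, ((A s).updateRow i (A' i)).det) s :=
    ((D.hasFDerivAt (A s)).comp_hasDerivAt s hA).congr_deriv (D.linearDeriv_apply _ _)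
  have hrow (i : n) : ((A s).updateRow i (A' i)).det = (A' * (A s).adjugate) i i := by
    rw [← Matrix.cramer_transpose_apply, Matrix.cramer_eq_adjugate_mulVec,
      ← Matrix.adjugate_transpose, Matrix.mulVec_transpose]
    rfl
  rw [Matrix.trace_mul_comm]
  exact hrows.congr_deriv (Finset.sum_congr rfl fun i _ => hrow i)

lemma hasDerivAt_inv [CompleteSpace 𝕜] (hA : HasDerivAt A A' s) (hs : (A s).det ≠ 0) :
    HasDerivAt (fun r => (A r)⁻¹) (-((A s)⁻¹ * A' * (A s)⁻¹)) s := by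
  -- `HasDerivAt` sees only the topology, so any complete algebra norm on matrices will do.
  let : NormedRing (Matrix n n 𝕜) := Matrix.linftyOpNormedRing
  let : NormedAlgebra 𝕜 (Matrix n n 𝕜) := Matrix.linftyOpNormedAlgebra
  have : @CompleteSpace (Matrix n n 𝕜) PseudoMetricSpace.toUniformSpace :=
    inferInstanceAs (CompleteSpace (n → n → 𝕜))
  obtain ⟨U, hU⟩ : IsUnit (A s) := (Matrix.isUnit_iff_isUnit_det _).2 hs.isUnit
  have hinv := hasFDerivAt_ringInverse (𝕜 := 𝕜) U
  rw [hU] at hinv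
  simp only [Matrix.nonsing_inv_eq_ringInverse, ← hU, Ring.inverse_unit]
  exact hinv.comp_hasDerivAt s hA

lemma hasDerivAt_dotProduct_inv_mulVec [CompleteSpace 𝕜] {v w : 𝕜 → n → 𝕜} {v' w' : n → 𝕜}
    (hv : HasDerivAt v v' s) (hA : HasDerivAt A A' s) (hw : HasDerivAt w w' s)
    (hs : (A s).det ≠ 0) :
    HasDerivAt (fun r => v r ⬝ᵥ (A r)⁻¹ *ᵥ w r)
      (v' ⬝ᵥ (A s)⁻¹ *ᵥ w s + v s ⬝ᵥ (A s)⁻¹ *ᵥ w'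
        - v s ⬝ᵥ ((A s)⁻¹ * A' * (A s)⁻¹) *ᵥ w s) s := by
  refine (hasDerivAt_dotProduct hv (hasDerivAt_mulVec (hasDerivAt_inv hA hs) hw)).congr_deriv ?_
  rw [neg_mulVec, dotProduct_add, dotProduct_neg]
  ring

end MatrixDerivative

section MatrixSmoothness

variable {𝕜 E ι : Type*} [NontriviallyNormedField 𝕜] [NormedAddCommGroup E] [NormedSpace 𝕜 E]
  [Fintype ι] [DecidableEq ι] {n : ℕ∞ω} {A : E → Matrix ι ι 𝕜} {v w : E → ι → 𝕜} {p : E}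

lemma contDiffAt_det (hA : ∀ i j, ContDiffAt 𝕜 n (fun q => A q i j) p) :
    ContDiffAt 𝕜 n (fun q => (A q).det) p := by
  simp only [Matrix.det_apply]
  exact ContDiffAt.sum fun σ _ => (contDiffAt_prod fun i _ => hA (σ i) i).const_smul _

lemma contDiffAt_adjugate (hA : ∀ i j, ContDiffAt 𝕜 n (fun q => A q i j) p) (i j : ι) :
    ContDiffAt 𝕜 n (fun q => (A q).adjugate i j) p := by
  simp only [Matrix.adjugate_apply]
  refine contDiffAt_det fun k l => ?_
  obtain rfl | hk := eq_or_ne k j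
  · simpa only [Matrix.updateRow_self] using contDiffAt_const
  · simpa only [Matrix.updateRow_ne hk] using hA k l

lemma contDiffAt_dotProduct_inv_mulVec (hv : ∀ i, ContDiffAt 𝕜 n (fun q => v q i) p)
    (hA : ∀ i j, ContDiffAt 𝕜 n (fun q => A q i j) p)
    (hw : ∀ i, ContDiffAt 𝕜 n (fun q => w q i) p) (hp : (A p).det ≠ 0) :
    ContDiffAt 𝕜 n (fun q => v q ⬝ᵥ (A q)⁻¹ *ᵥ w q) p := by
  simp only [dotProduct, mulVec, Matrix.inv_def, Ring.inverse_eq_inv', Matrix.smul_apply]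
  exact ContDiffAt.sum fun i _ => (hv i).mul <| ContDiffAt.sum fun j _ =>
    (((contDiffAt_det hA).inv hp).smul (contDiffAt_adjugate hA i j)).mul (hw j)

end MatrixSmoothness

section ScatteringData

variable {ι : Type*}

/-- The vector of soliton exponentials `ηᵢᵏ cᵢ exp (-ηᵢ x - ηᵢ³ t)`, that is `(-∂ₓ)ᵏ` of the one for
`k = 0`; in the usual scattering data `cᵢ² = mᵢ`. -/
noncomputable def wave (c η : ι → ℝ) (k : ℕ) (p : ℝ × ℝ) : ι → ℝ :=
  fun i => η i ^ k * (c i * exp (-η i * p.1 - η i ^ 3 * p.2))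

/-- The scattering matrix `G` of the `N`-soliton solution, a Cauchy-like matrix in the soliton
exponentials. -/
noncomputable def scatteringMatrix (c η : ι → ℝ) (p : ℝ × ℝ) : Matrix ι ι ℝ :=
  of fun i j => wave c η 0 p i * wave c η 0 p j / (η i + η j)

variable (c η : ι → ℝ) (k : ℕ) (p : ℝ × ℝ)

lemma wave_add (l : ℕ) (i : ι) : wave c η (k + l) p i = η i ^ l * wave c η k p i := by
  simp only [wave]
  ring

lemma diagonal_mulVec_wave [Fintype ι] [DecidableEq ι] (l : ℕ) :
    diagonal (fun i => η i ^ l) *ᵥ wave c η k p = wave c η (k + l) p := by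
  ext i
  rw [mulVec_diagonal, wave_add]

lemma hasDerivAt_wave_x [Finite ι] :
    HasDerivAt (fun x => wave c η k (x, p.2)) (-wave c η (k + 1) p) p.1 := by
  have := Fintype.ofFinite ι
  refine hasDerivAt_pi.2 fun i => ?_
  have hphase : HasDerivAt (fun x => -η i * x - η i ^ 3 * p.2) (-η i) p.1 := by
    simpa using ((hasDerivAt_id p.1).const_mul (-η i)).sub_const (η i ^ 3 * p.2)
  refine ((hphase.exp.const_mul (c i)).const_mul (η i ^ k)).congr_deriv ?_
  simp only [wave, Pi.neg_apply]
  ring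

lemma hasDerivAt_wave_t [Finite ι] :
    HasDerivAt (fun t => wave c η k (p.1, t)) (-wave c η (k + 3) p) p.2 := by
  have := Fintype.ofFinite ι
  refine hasDerivAt_pi.2 fun i => ?_
  have hphase : HasDerivAt (fun t => -η i * p.1 - η i ^ 3 * t) (-η i ^ 3) p.2 := by
    simpa using ((hasDerivAt_id p.2).const_mul (η i ^ 3)).const_sub (-η i * p.1)
  refine ((hphase.exp.const_mul (c i)).const_mul (η i ^ k)).congr_deriv ?_
  simp only [wave, Pi.neg_apply]
  ring

lemma contDiff_wave {n : ℕ∞ω} (i : ι) : ContDiff ℝ n (fun q => wave c η k q i) := by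
  unfold wave
  fun_prop

lemma contDiff_scatteringMatrix {n : ℕ∞ω} (i j : ι) :
    ContDiff ℝ n (fun q => scatteringMatrix c η q i j) :=
  ((contDiff_wave c η 0 i).mul (contDiff_wave c η 0 j)).div_const _

lemma scatteringMatrix_transpose : (scatteringMatrix c η p)ᵀ = scatteringMatrix c η p := by
  ext i j
  simp only [scatteringMatrix, transpose_apply, of_apply, mul_comm, add_comm]

variable {η} (hη : ∀ i j, η i + η j ≠ 0)
include hη

lemma diagonal_mul_scatteringMatrix_sub [Fintype ι] [DecidableEq ι] :
    diagonal (fun i => η i ^ 2) * scatteringMatrix c η p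
        - scatteringMatrix c η p * diagonal (fun i => η i ^ 2) =
      vecMulVec (wave c η 1 p) (wave c η 0 p) - vecMulVec (wave c η 0 p) (wave c η 1 p) := by
  ext i j
  simp only [Matrix.sub_apply, diagonal_mul, mul_diagonal, vecMulVec_apply, scatteringMatrix,
    of_apply, wave_add c η 0 p 1]
  field_simp [hη i j]
  ring

variable [Finite ι]

lemma hasDerivAt_scatteringMatrix_x :
    HasDerivAt (fun x => scatteringMatrix c η (x, p.2))
      (-vecMulVec (wave c η 0 p) (wave c η 0 p)) p.1 := by
  refine hasDerivAt_matrix.2 fun i j => ?_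
  have hwave := hasDerivAt_pi.1 (hasDerivAt_wave_x c η 0 p)
  refine (((hwave i).mul (hwave j)).div_const (η i + η j)).congr_deriv ?_
  simp only [Pi.neg_apply, Matrix.neg_apply, vecMulVec_apply, wave_add c η 0 p 1, Prod.mk.eta]
  field_simp [hη i j]
  ring

lemma hasDerivAt_scatteringMatrix_t :
    HasDerivAt (fun t => scatteringMatrix c η (p.1, t))
      (-(vecMulVec (wave c η 2 p) (wave c η 0 p) - vecMulVec (wave c η 1 p) (wave c η 1 p)
        + vecMulVec (wave c η 0 p) (wave c η 2 p))) p.2 := by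
  refine hasDerivAt_matrix.2 fun i j => ?_
  have hwave := hasDerivAt_pi.1 (hasDerivAt_wave_t c η 0 p)
  refine (((hwave i).mul (hwave j)).div_const (η i + η j)).congr_deriv ?_
  simp only [Pi.neg_apply, Matrix.neg_apply, Matrix.add_apply, Matrix.sub_apply, vecMulVec_apply,
    wave_add c η 0 p 1, wave_add c η 0 p 2, wave_add c η 0 p 3, Prod.mk.eta]
  -- The denominator cancels because `ηᵢ³ + ηⱼ³ = (ηᵢ + ηⱼ) (ηᵢ² - ηᵢ ηⱼ + ηⱼ²)`.
  field_simp [hη i j]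
  ring

end ScatteringData

section Moments

variable {ι : Type*} [Fintype ι] [DecidableEq ι]

/-- The tau function `det (I + G)`. -/
noncomputable def tau (c η : ι → ℝ) (p : ℝ × ℝ) : ℝ :=
  (1 + scatteringMatrix c η p).det

/-- The moments `wⱼᵀ (I + G)⁻¹ wₖ` of the soliton exponentials `wₖ = wave c η k`. They form a system
closed under `∂ₓ` and `∂ₜ`, and the logarithmic derivative of `tau` is `-moment c η 0 0`. -/
noncomputable def moment (c η : ι → ℝ) (j k : ℕ) (p : ℝ × ℝ) : ℝ :=
  wave c η j p ⬝ᵥ (1 + scatteringMatrix c η p)⁻¹ *ᵥ wave c η k p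

lemma moment_comm (c η : ι → ℝ) (j k : ℕ) (p : ℝ × ℝ) : moment c η j k p = moment c η k j p := by
  rw [moment, dotProduct_mulVec, ← mulVec_transpose, transpose_nonsing_inv, transpose_add,
    transpose_one, scatteringMatrix_transpose, dotProduct_comm, moment]

variable {c η : ι → ℝ} {p : ℝ × ℝ} (j k : ℕ)

lemma contDiffAt_moment {n : ℕ∞ω} (hp : tau c η p ≠ 0) : ContDiffAt ℝ n (moment c η j k) p :=
  contDiffAt_dotProduct_inv_mulVec (fun i => (contDiff_wave c η j i).contDiffAt)
    (fun i i' => contDiffAt_const.add (contDiff_scatteringMatrix c η i i').contDiffAt)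
    (fun i => (contDiff_wave c η k i).contDiffAt) hp

lemma eventually_tau_ne_zero (hp : tau c η p ≠ 0) : ∀ᶠ q in 𝓝 p, tau c η q ≠ 0 :=
  (contDiffAt_det (n := 0) fun i j => contDiffAt_const.add
    (contDiff_scatteringMatrix c η i j).contDiffAt).continuousAt.eventually_ne hp

variable (hη : ∀ i j, η i + η j ≠ 0) (hp : tau c η p ≠ 0)
include hη hp

lemma hasDerivAt_log_tau_x :
    HasDerivAt (fun x => log (tau c η (x, p.2))) (-moment c η 0 0 p) p.1 := by
  have htau := hasDerivAt_det (hasDerivAt_matrix_const_add 1 (hasDerivAt_scatteringMatrix_x c p hη))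
  refine (htau.log hp).congr_deriv ?_
  rw [mul_neg, trace_neg, mul_vecMulVec, trace_vecMulVec, dotProduct_comm, moment, inv_def,
    Ring.inverse_eq_inv', smul_mulVec, dotProduct_smul, smul_eq_mul, neg_div, div_eq_inv_mul]

lemma hasDerivAt_moment_x :
    HasDerivAt (fun x => moment c η j k (x, p.2))
      (-moment c η (j + 1) k p - moment c η j (k + 1) p
        + moment c η j 0 p * moment c η 0 k p) p.1 := by
  refine (hasDerivAt_dotProduct_inv_mulVec (hasDerivAt_wave_x c η j p)
    (hasDerivAt_matrix_const_add 1 (hasDerivAt_scatteringMatrix_x c p hη))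
    (hasDerivAt_wave_x c η k p) hp).congr_deriv ?_
  simp only [moment, ← dotProduct_mul_vecMulVec_mul_mulVec, mul_neg, neg_mul, neg_mulVec,
    mulVec_neg, neg_dotProduct, dotProduct_neg]
  ring

lemma hasDerivAt_moment_t :
    HasDerivAt (fun t => moment c η j k (p.1, t))
      (-moment c η (j + 3) k p - moment c η j (k + 3) p + moment c η j 2 p * moment c η 0 k p
        - moment c η j 1 p * moment c η 1 k p + moment c η j 0 p * moment c η 2 k p) p.2 := by
  refine (hasDerivAt_dotProduct_inv_mulVec (hasDerivAt_wave_t c η j p)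
    (hasDerivAt_matrix_const_add 1 (hasDerivAt_scatteringMatrix_t c p hη))
    (hasDerivAt_wave_t c η k p) hp).congr_deriv ?_
  simp only [moment, ← dotProduct_mul_vecMulVec_mul_mulVec, mul_neg, neg_mul, neg_mulVec,
    mulVec_neg, neg_dotProduct, dotProduct_neg, mul_add, add_mul, mul_sub, sub_mul, add_mulVec,
    sub_mulVec, dotProduct_add, dotProduct_sub]
  ring

lemma moment_add_two_sub :
    moment c η j (k + 2) p - moment c η (j + 2) k p =
      moment c η j 1 p * moment c η 0 k p - moment c η j 0 p * moment c η 1 k p := by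
  set A := 1 + scatteringMatrix c η p
  set D := diagonal fun i => η i ^ 2
  have hA : IsUnit A.det := hp.isUnit
  have hcomm : A⁻¹ * D - D * A⁻¹ = A⁻¹ * (D * A - A * D) * A⁻¹ := by
    rw [mul_sub, sub_mul, ← mul_assoc, mul_nonsing_inv_cancel_right _ _ hA,
      nonsing_inv_mul_cancel_left _ _ hA]
  have hDA : D * A - A * D = vecMulVec (wave c η 1 p) (wave c η 0 p)
      - vecMulVec (wave c η 0 p) (wave c η 1 p) := by
    rw [← diagonal_mul_scatteringMatrix_sub c p hη, mul_add, add_mul, mul_one, one_mul,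
      add_sub_add_left_eq_sub]
  calc moment c η j (k + 2) p - moment c η (j + 2) k p
      = wave c η j p ⬝ᵥ (A⁻¹ * D - D * A⁻¹) *ᵥ wave c η k p := by
        rw [sub_mulVec, dotProduct_sub, ← mulVec_mulVec, ← mulVec_mulVec, diagonal_mulVec_wave,
          dotProduct_mulVec _ D, ← mulVec_transpose, diagonal_transpose, diagonal_mulVec_wave]
        rfl
    _ = moment c η j 1 p * moment c η 0 k p - moment c η j 0 p * moment c η 1 k p := by
        rw [hcomm, hDA, mul_sub, sub_mul, sub_mulVec, dotProduct_sub]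
        simp only [dotProduct_mul_vecMulVec_mul_mulVec]
        rfl

end Moments

section NSoliton

variable {ι : Type*} [Fintype ι] [DecidableEq ι]

/-- The `N`-soliton solution `2 ∂ₓ² log det (I + G)`. -/
noncomputable def nSoliton (c η : ι → ℝ) (p : ℝ × ℝ) : ℝ :=
  2 * pderivX (pderivX fun q => log (tau c η q)) p

variable {c η : ι → ℝ} {p : ℝ × ℝ}
  (hη : ∀ i j, η i + η j ≠ 0) (hp : tau c η p ≠ 0)
include hη hp

lemma pderivX_log_tau_eventuallyEq :
    pderivX (fun q => log (tau c η q)) =ᶠ[𝓝 p] fun q => -moment c η 0 0 q :=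
  (eventually_tau_ne_zero hp).mono fun _ hq => (hasDerivAt_log_tau_x hη hq).deriv

lemma pderivX_moment_zero_zero_eventuallyEq :
    pderivX (moment c η 0 0) =ᶠ[𝓝 p] fun q => moment c η 0 0 q ^ 2 - 2 * moment c η 0 1 q := by
  filter_upwards [eventually_tau_ne_zero hp] with q hq
  refine (hasDerivAt_moment_x 0 0 hη hq).deriv.trans ?_
  rw [moment_comm c η 1 0]
  ring

lemma pderivX_pderivX_moment_zero_zero_eventuallyEq :
    pderivX (pderivX (moment c η 0 0)) =ᶠ[𝓝 p] fun q =>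
      2 * (moment c η 0 0 q ^ 3 - 3 * moment c η 0 0 q * moment c η 0 1 q + moment c η 1 1 q
        + moment c η 0 2 q) := by
  filter_upwards [eventually_tau_ne_zero hp] with q hq
  have hderiv := ((hasDerivAt_moment_x 0 0 hη hq).pow 2).sub
    ((hasDerivAt_moment_x 0 1 hη hq).const_mul 2)
  refine (pderivX_eventuallyEq
    (pderivX_moment_zero_zero_eventuallyEq hη hq)).eq_of_nhds.trans (hderiv.deriv.trans ?_)
  simp only [moment_comm c η 1 0, Prod.mk.eta, Nat.cast_ofNat, Nat.add_one_sub_one, pow_one]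
  ring

lemma pderivX_pderivX_pderivX_moment_zero_zero :
    pderivX (pderivX (pderivX (moment c η 0 0))) p =
      6 * moment c η 0 0 p ^ 4 - 24 * moment c η 0 0 p ^ 2 * moment c η 0 1 p
        + 14 * moment c η 0 1 p ^ 2 + 6 * moment c η 0 0 p * moment c η 1 1 p
        + 8 * moment c η 0 0 p * moment c η 0 2 p - 6 * moment c η 1 2 p
        - 2 * moment c η 0 3 p := by
  have h₀₀ := hasDerivAt_moment_x 0 0 hη hp
  have hderiv := ((((h₀₀.pow 3).sub
    ((h₀₀.const_mul 3).mul (hasDerivAt_moment_x 0 1 hη hp))).add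
    (hasDerivAt_moment_x 1 1 hη hp)).add (hasDerivAt_moment_x 0 2 hη hp)).const_mul 2
  refine (pderivX_eventuallyEq
    (pderivX_pderivX_moment_zero_zero_eventuallyEq hη hp)).eq_of_nhds.trans (hderiv.deriv.trans ?_)
  simp only [moment_comm c η 1 0, moment_comm c η 2 1, Prod.mk.eta, Nat.cast_ofNat,
    Nat.add_one_sub_one, Nat.reduceAdd]
  ring

lemma pderivT_moment_zero_zero :
    pderivT (moment c η 0 0) p =
      2 * moment c η 0 0 p * moment c η 0 2 p - moment c η 0 1 p ^ 2 - 2 * moment c η 0 3 p := by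
  refine (hasDerivAt_moment_t 0 0 hη hp).deriv.trans ?_
  rw [moment_comm c η 3 0, moment_comm c η 2 0, moment_comm c η 1 0]
  ring

lemma solvesPotentialKdVAt_moment_zero_zero : SolvesPotentialKdVAt (moment c η 0 0) p := by
  have hrel : moment c η 0 3 p - moment c η 1 2 p =
      moment c η 0 1 p ^ 2 - moment c η 0 0 p * moment c η 1 1 p := by
    rw [moment_comm c η 1 2, moment_add_two_sub 0 1 hη hp, sq]
  unfold SolvesPotentialKdVAt
  rw [pderivT_moment_zero_zero hη hp, pderivX_pderivX_pderivX_moment_zero_zero hη hp,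
    (pderivX_moment_zero_zero_eventuallyEq hη hp).eq_of_nhds]
  linear_combination (-6) * hrel

lemma nSoliton_eventuallyEq :
    nSoliton c η =ᶠ[𝓝 p] fun q => -2 * pderivX (moment c η 0 0) q := by
  filter_upwards [pderivX_eventuallyEq (pderivX_log_tau_eventuallyEq hη hp)] with q hq
  rw [nSoliton, hq, pderivX, deriv.fun_neg, pderivX]
  ring

lemma contDiffAt_nSoliton : ContDiffAt ℝ ω (nSoliton c η) p :=
  have hwx := contDiffAt_pderivX (contDiffAt_moment (n := ω) 0 0 hp) le_rfl
  (contDiffAt_const.mul hwx).congr_of_eventuallyEq (nSoliton_eventuallyEq hη hp)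

lemma solvesKdVAt_nSoliton : SolvesKdVAt (nSoliton c η) p :=
  (solvesKdVAt_of_potential (contDiffAt_moment 0 0 hp)
    ((eventually_tau_ne_zero hp).mono fun _ hq =>
      solvesPotentialKdVAt_moment_zero_zero hη hq)).congr_of_eventuallyEq
    (nSoliton_eventuallyEq hη hp)

end NSoliton

lemma scatteringMatrix_sqrt {ι : Type*} {m : ι → ℝ} (hm : ∀ i, 0 ≤ m i) (η : ι → ℝ) (x t : ℝ) :
    scatteringMatrix (fun i => √(m i)) η (x, t) = of fun i j =>
      √(m i * m j) / (η i + η j) * exp (-(η i + η j) * x - (η i ^ 3 + η j ^ 3) * t) := by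
  ext i j
  have hexp : exp (-(η i + η j) * x - (η i ^ 3 + η j ^ 3) * t) =
      exp (-η i * x - η i ^ 3 * t) * exp (-η j * x - η j ^ 3 * t) := by
    rw [← exp_add]
    ring_nf
  simp only [scatteringMatrix, wave, of_apply, pow_zero, one_mul, sqrt_mul (hm i), hexp]
  ring

end KdV

open KdV

theorem N_soliton_solves_KdV_general {ι : Type*} [Fintype ι] [DecidableEq ι] (m η : ι → ℝ)
    (hm : ∀ i, 0 ≤ m i) (hη : ∀ i j, η i + η j ≠ 0) (G : ℝ → ℝ → Matrix ι ι ℝ)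
    (hG : ∀ x t, G x t = Matrix.of fun i j =>
      √(m i * m j) / (η i + η j) * exp (-(η i + η j) * x - (η i ^ 3 + η j ^ 3) * t))
    (u : ℝ × ℝ → ℝ) (hu : u = fun p => 2 * pderivX (pderivX fun q => log (1 + G q.1 q.2).det) p)
    (p : ℝ × ℝ) (hdet : 0 < (1 + G p.1 p.2).det) :
    ContDiffAt ℝ ω u p ∧
      pderivT u p = 3 / 2 * u p * pderivX u p + 1 / 4 * pderivX (pderivX (pderivX u)) p := by
  have hG_eq (q : ℝ × ℝ) : G q.1 q.2 = scatteringMatrix (fun i => √(m i)) η q :=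
    (hG q.1 q.2).trans (scatteringMatrix_sqrt hm η q.1 q.2).symm
  have hu_eq : u = nSoliton (fun i => √(m i)) η := by
    simp only [hu, hG_eq]
    rfl
  have hp : tau (fun i => √(m i)) η p ≠ 0 := by
    rw [tau, ← hG_eq]
    exact hdet.ne'
  rw [hu_eq]
  exact ⟨contDiffAt_nSoliton hη hp, solvesKdVAt_nSoliton hη hp⟩

/-- The N-soliton solution `u = 2 ∂_x² log det(I + G(x,t))` of the KdV equation
`u_t = (3/2) u u_x + (1/4) u_{xxx}`, where `G` is the scattering-data matrix. -/
theorem N_soliton_solves_KdV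
    (N : ℕ) (hN : 1 ≤ N) (m η : Fin N → ℝ)
    (hm : ∀ i, 0 < m i) (hη : ∀ i, 0 < η i) (hη' : Function.Injective η)
    (G : ℝ → ℝ → Matrix (Fin N) (Fin N) ℝ)
    (hG : ∀ x t, G x t = Matrix.of fun i j =>
      Real.sqrt (m i * m j) / (η i + η j) *
        Real.exp (-(η i + η j) * x - (η i ^ 3 + η j ^ 3) * t))
    (hdet : ∀ x t : ℝ, 0 < (1 + G x t).det)
    (u : ℝ × ℝ → ℝ)
    (hu : u = fun p =>
      2 * pderivX (pderivX (fun q => Real.log (1 + G q.1 q.2).det)) p) :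
    ContDiff ℝ (⊤ : ℕ∞) u ∧
    (∀ p : ℝ × ℝ,
      pderivT u p =
        3 / 2 * u p * pderivX u p + 1 / 4 * pderivX (pderivX (pderivX u)) p) := by
  have hlocal := fun p => N_soliton_solves_KdV_general m η (fun i => (hm i).le)
    (fun i j => (add_pos (hη i) (hη j)).ne') G hG u hu p (hdet p.1 p.2)
  exact ⟨contDiff_iff_contDiffAt.2 fun p => (hlocal p).1.of_le le_top, fun p => (hlocal p).2⟩
end

section
/- Let N ≥ 1, let c_1, …, c_N be positive reals and let κ_1, …, κ_N be pairwise distinct positive reals. For (x,t) ∈ ℝ × ℝ define the N×N real matrix A(x,t) by A_{nm}(x,t) = δ_{nm} + c_n²·(e^{−(κ_m+κ_n)x}/(κ_m+κ_n))·e^{8κ_n³ t}. Then det A(x,t) > 0 for all (x,t), and the function u(x,t) := −2·∂_x²(log det A(x,t)) is smooth and solves the KdV equation u_t − 6·u·u_x + u_{xxx} = 0 at every point of ℝ × ℝ (the N-soliton solution). -/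
open Real Matrix

/-!
For one soliton `∂ₓ log det A` is, up to a constant, `κ tanh (κ x - 4 κ³ t + const)`, and the
hyperbolic tangent is governed by a Riccati equation. In general, with `K = diag κ`, the matrix
`M = K (2 A⁻¹ - 1)` solves `M_x = K² - M²` and `M_t = 4 (M + K) K² (M - K)`, because `A - 1` evolves
linearly: `A_x = -(K (A - 1) + (A - 1) K)` and `A_t = 8 K³ (A - 1)`. Moreover
`M_x = 2 K A⁻¹ (K (A - 1) + (A - 1) K) A⁻¹` has rank at most one, since `K (A - 1) + (A - 1) K` has,
so that `tr (M_x²) = (tr M_x)²`. Cyclicity of the trace then turns the two flow equations into the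
potential KdV equation `v_t - 3 v_x² + v_xxx = 0` for `v = -2 tr M`. Finally `∂ₓ log det A` and
`tr M` differ by the constant `tr K`, so `u = v_x`, and the `x`-derivative of potential KdV is KdV.

Positivity of `det A` holds because `A - 1` is the product of a nonnegative diagonal matrix and the
Gram matrix of the functions `e^{-κ_n s}` on `(x, ∞)`.
-/

section PartialDerivatives

variable {f f' : ℝ × ℝ → ℝ}

theorem pderivX_eq (h : ∀ x t, HasDerivAt (fun y => f (y, t)) (f' (x, t)) x) : pderivX f = f' :=
  funext fun p => (h p.1 p.2).deriv

theorem pderivT_eq (h : ∀ x t, HasDerivAt (fun s => f (x, s)) (f' (x, t)) t) : pderivT f = f' :=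
  funext fun p => (h p.1 p.2).deriv

theorem hasDerivAt_slice_fst (hf : Differentiable ℝ f) (x t : ℝ) :
    HasDerivAt (fun y => f (y, t)) (fderiv ℝ f (x, t) (1, 0)) x :=
  (hf (x, t)).hasFDerivAt.comp_hasDerivAt x ((hasDerivAt_id x).prodMk (hasDerivAt_const x t))

theorem hasDerivAt_slice_snd (hf : Differentiable ℝ f) (x t : ℝ) :
    HasDerivAt (fun s => f (x, s)) (fderiv ℝ f (x, t) (0, 1)) t :=
  (hf (x, t)).hasFDerivAt.comp_hasDerivAt t ((hasDerivAt_const t x).prodMk (hasDerivAt_id t))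

theorem pderivX_eq_fderiv (hf : Differentiable ℝ f) : pderivX f = fun p => fderiv ℝ f p (1, 0) :=
  pderivX_eq (hasDerivAt_slice_fst hf)

theorem pderivT_eq_fderiv (hf : Differentiable ℝ f) : pderivT f = fun p => fderiv ℝ f p (0, 1) :=
  pderivT_eq (hasDerivAt_slice_snd hf)

theorem hasDerivAt_pderivX (hf : Differentiable ℝ f) (x t : ℝ) :
    HasDerivAt (fun y => f (y, t)) (pderivX f (x, t)) x :=
  (hasDerivAt_slice_fst hf x t).differentiableAt.hasDerivAt

theorem contDiff_pderivX {m n : WithTop ℕ∞} (hf : ContDiff ℝ n f) (hmn : m + 1 ≤ n) :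
    ContDiff ℝ m (pderivX f) := by
  rw [pderivX_eq_fderiv (hf.differentiable (by rintro rfl; simp at hmn))]
  exact (hf.fderiv_right hmn).clm_apply contDiff_const

theorem pderivX_pderivT_comm (hf : ContDiff ℝ 2 f) : pderivX (pderivT f) = pderivT (pderivX f) := by
  have hdf : Differentiable ℝ f := hf.differentiable (by norm_num)
  have hddf : Differentiable ℝ (fderiv ℝ f) :=
    (hf.fderiv_right (m := 1) (by norm_num)).differentiable one_ne_zero
  have fderiv_eval (v w p : ℝ × ℝ) :
      fderiv ℝ (fun q => fderiv ℝ f q v) p w = fderiv ℝ (fderiv ℝ f) p w v := by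
    simp [fderiv_clm_apply (hddf p) (differentiableAt_const v)]
  rw [pderivT_eq_fderiv hdf, pderivX_eq_fderiv hdf,
    pderivX_eq_fderiv (hddf.clm_apply (differentiable_const _)),
    pderivT_eq_fderiv (hddf.clm_apply (differentiable_const _))]
  funext p
  rw [fderiv_eval, fderiv_eval]
  exact (hf.contDiffAt.isSymmSndFDerivAt (by simp)).eq _ _

theorem kdv_of_potential_kdv {v : ℝ × ℝ → ℝ} (hv : ContDiff ℝ 4 v)
    (h : ∀ p, pderivT v p - 3 * pderivX v p ^ 2 + pderivX (pderivX (pderivX v)) p = 0)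
    (p : ℝ × ℝ) :
    pderivT (pderivX v) p - 6 * pderivX v p * pderivX (pderivX v) p +
      pderivX (pderivX (pderivX (pderivX v))) p = 0 := by
  have hvx : ContDiff ℝ 3 (pderivX v) := contDiff_pderivX hv (by norm_num)
  have hvxx : ContDiff ℝ 2 (pderivX (pderivX v)) := contDiff_pderivX hvx (by norm_num)
  have hvxxx : ContDiff ℝ 1 (pderivX (pderivX (pderivX v))) := contDiff_pderivX hvxx (by norm_num)
  have hvt : pderivT v = fun q => 3 * pderivX v q ^ 2 - pderivX (pderivX (pderivX v)) q :=
    funext fun q => by linear_combination h q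
  have hvtx : pderivX (pderivT v) = fun q => 3 * (2 * pderivX v q * pderivX (pderivX v) q) -
      pderivX (pderivX (pderivX (pderivX v))) q := by
    rw [hvt]
    refine pderivX_eq fun x t => ?_
    have hsq := (hasDerivAt_pderivX (hvx.differentiable (by norm_num)) x t).fun_pow 2
    have hxxx := hasDerivAt_pderivX (hvxxx.differentiable one_ne_zero) x t
    simpa using (hsq.const_mul 3).fun_sub hxxx
  rw [← pderivX_pderivT_comm (hv.of_le (by norm_num)), hvtx]
  ring

end PartialDerivatives

section RiccatiFlow

section Algebra

variable {R S F : Type*} [Ring R] [AddCommGroup S] [FunLike F R S] [AddMonoidHomClass F R S]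
  {τ : F} (hτ : ∀ a b, τ (a * b) = τ (b * a)) (K M : R)
include hτ

theorem trace_riccatiFlow_fst_third_deriv {M₁ M₂ : R}
    (hM₁ : M₁ = K ^ 2 - M ^ 2) (hM₂ : M₂ = -(M₁ * M + M * M₁)) :
    τ (-(M₂ * M + M₁ * M₁ + (M₁ * M₁ + M * M₂))) =
      4 • τ (K ^ 2 * M₁) - 6 • τ (M₁ ^ 2) := by
  have hsq : τ (M ^ 2 * M₁) = τ (K ^ 2 * M₁) - τ (M₁ ^ 2) := by
    rw [← map_sub, pow_two M₁, ← sub_mul]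
    congr 2
    rw [hM₁, sub_sub_cancel]
  have hcyc : τ (M * (M₁ * M)) = τ (M ^ 2 * M₁) := by rw [hτ, mul_assoc, ← pow_two, hτ]
  have hMM₂ : τ (M * M₂) = -(2 • τ (M ^ 2 * M₁)) := by
    rw [hM₂, mul_neg, mul_add, map_neg, map_add, hcyc, ← mul_assoc, ← pow_two, two_nsmul]
  simp only [map_neg, map_add, hτ M₂ M, hMM₂, hsq, ← pow_two]
  abel

theorem trace_riccatiFlow_snd :
    τ ((M + K) * K ^ 2 * (M - K)) = -τ (K ^ 2 * (K ^ 2 - M ^ 2)) := by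
  have hexpand : (M + K) * K ^ 2 * (M - K) =
      M * K ^ 2 * M - M * K ^ 3 + K ^ 3 * M - K ^ 2 * K ^ 2 := by noncomm_ring
  have hcyc : τ (M * K ^ 2 * M) = τ (K ^ 2 * M ^ 2) := by rw [mul_assoc, hτ, mul_assoc, ← pow_two]
  rw [hexpand, mul_sub, map_sub, map_add, map_sub, map_sub, hcyc, hτ M (K ^ 3)]
  abel

end Algebra

variable {R : Type*} [NormedRing R] [NormedAlgebra ℝ R] {K : R} {M : ℝ × ℝ → R}

/-- The operator Riccati flow `M_x = K² - M²`, `M_t = 4 (M + K) K² (M - K)` in a real normed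
algebra with a fixed element `K`. Its scalar solutions include `κ tanh (κ x - 4 κ³ t)`, whose
derivative `κ² sech²` is the one-soliton profile up to a factor. -/
structure IsRiccatiFlow (K : R) (M : ℝ × ℝ → R) : Prop where
  hasDerivAt_fst : ∀ x t, HasDerivAt (fun y => M (y, t)) (K ^ 2 - M (x, t) ^ 2) x
  hasDerivAt_snd : ∀ x t, HasDerivAt (fun s => M (x, s))
    ((4 : ℝ) • ((M (x, t) + K) * K ^ 2 * (M (x, t) - K))) t

theorem IsRiccatiFlow.potential_kdv (hM : IsRiccatiFlow K M) {τ : R →L[ℝ] ℝ}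
    (hτ : ∀ a b, τ (a * b) = τ (b * a))
    (hrank : ∀ p, τ ((K ^ 2 - M p ^ 2) ^ 2) = τ (K ^ 2 - M p ^ 2) ^ 2) (p : ℝ × ℝ) :
    pderivT (fun q => -2 * τ (M q)) p - 3 * pderivX (fun q => -2 * τ (M q)) p ^ 2 +
      pderivX (pderivX (pderivX fun q => -2 * τ (M q))) p = 0 := by
  let M₁ : ℝ × ℝ → R := fun q => K ^ 2 - M q ^ 2
  let M₂ : ℝ × ℝ → R := fun q => -(M₁ q * M q + M q * M₁ q)
  let M₃ : ℝ × ℝ → R := fun q => -(M₂ q * M q + M₁ q * M₁ q + (M₁ q * M₁ q + M q * M₂ q))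
  have hM₁ (x t) : HasDerivAt (fun y => M (y, t)) (M₁ (x, t)) x := hM.hasDerivAt_fst x t
  have hM₂ (x t) : HasDerivAt (fun y => M₁ (y, t)) (M₂ (x, t)) x := by
    simpa only [M₁, M₂, pow_two (M _)] using ((hM₁ x t).fun_mul (hM₁ x t)).const_sub (K ^ 2)
  have hM₃ (x t) : HasDerivAt (fun y => M₂ (y, t)) (M₃ (x, t)) x :=
    (((hM₂ x t).mul (hM₁ x t)).add ((hM₁ x t).mul (hM₂ x t))).neg
  have hτ_comp {f : ℝ → R} {f' : R} {s : ℝ} (hf : HasDerivAt f f' s) :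
      HasDerivAt (fun y => -2 * τ (f y)) (-2 * τ f') s :=
    (τ.hasFDerivAt.comp_hasDerivAt s hf).const_mul (-2)
  have hvx : pderivX (fun q => -2 * τ (M q)) = fun q => -2 * τ (M₁ q) :=
    pderivX_eq fun x t => hτ_comp (hM₁ x t)
  have hvxx : pderivX (fun q => -2 * τ (M₁ q)) = fun q => -2 * τ (M₂ q) :=
    pderivX_eq fun x t => hτ_comp (hM₂ x t)
  have hvxxx : pderivX (fun q => -2 * τ (M₂ q)) = fun q => -2 * τ (M₃ q) :=
    pderivX_eq fun x t => hτ_comp (hM₃ x t)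
  have hvt : pderivT (fun q => -2 * τ (M q)) = fun q => 8 * τ (K ^ 2 * M₁ q) := by
    refine pderivT_eq fun x t => (hτ_comp (hM.hasDerivAt_snd x t)).congr_deriv ?_
    rw [map_smul, trace_riccatiFlow_snd hτ, smul_eq_mul]
    ring
  have hτM₃ : τ (M₃ p) = 4 • τ (K ^ 2 * M₁ p) - 6 • τ (M₁ p ^ 2) :=
    trace_riccatiFlow_fst_third_deriv hτ K (M p) rfl rfl
  have hτM₁ : τ (M₁ p ^ 2) = τ (M₁ p) ^ 2 := hrank p
  rw [hvt, hvx, hvxx, hvxxx]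
  simp only [hτM₃, hτM₁, nsmul_eq_mul]
  ring

theorem sq_sub_mul_two_mul_inv_sub_one_sq {S : Type*} [Ring S] {A P : S} (hPA : P * A = 1)
    (hAP : A * P = 1) (K : S) :
    K ^ 2 - (K * (2 * P - 1)) ^ 2 =
      2 * (K * (P * (K * (A - 1) + (A - 1) * K) * P)) := by
  have hinner : P * (K * (A - 1) + (A - 1) * K) * P = P * K + K * P - 2 * (P * K * P) := by
    calc _ = P * K * (A * P) - P * K * P + P * A * (K * P) - P * K * P := by noncomm_ring
      _ = _ := by rw [hPA, hAP]; noncomm_ring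
  rw [hinner]
  noncomm_ring

theorem hasDerivAt_ringInverse [HasSummableGeomSeries R] {A : ℝ → R} {A' : R} {x : ℝ}
    (hA : HasDerivAt A A' x) (hunit : IsUnit (A x)) :
    HasDerivAt (fun y => Ring.inverse (A y))
      (-(Ring.inverse (A x) * A' * Ring.inverse (A x))) x := by
  obtain ⟨U, hU⟩ := hunit
  have hinv := hasFDerivAt_ringInverse (𝕜 := ℝ) U
  rw [hU] at hinv
  refine (hinv.comp_hasDerivAt x hA).congr_deriv ?_
  simp [← hU]

theorem isRiccatiFlow_of_linear_flow [HasSummableGeomSeries R] {A : ℝ × ℝ → R}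
    (hunit : ∀ p, IsUnit (A p))
    (hx : ∀ x t, HasDerivAt (fun y => A (y, t))
      (-(K * (A (x, t) - 1) + (A (x, t) - 1) * K)) x)
    (ht : ∀ x t, HasDerivAt (fun s => A (x, s)) ((8 : ℝ) • (K ^ 3 * (A (x, t) - 1))) t) :
    IsRiccatiFlow K fun p => K * (2 * Ring.inverse (A p) - 1) where
  hasDerivAt_fst x t := by
    refine ((((hasDerivAt_ringInverse (hx x t) (hunit _)).const_mul 2).sub_const 1).const_mul
      K).congr_deriv ?_
    rw [sq_sub_mul_two_mul_inv_sub_one_sq (Ring.inverse_mul_cancel _ (hunit _))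
      (Ring.mul_inverse_cancel _ (hunit _))]
    noncomm_ring
  hasDerivAt_snd x t := by
    refine ((((hasDerivAt_ringInverse (ht x t) (hunit _)).const_mul 2).sub_const 1).const_mul
      K).congr_deriv ?_
    have hAP := Ring.mul_inverse_cancel _ (hunit (x, t))
    generalize Ring.inverse (A (x, t)) = P at hAP ⊢
    have hinner : P * (K ^ 3 * (A (x, t) - 1)) * P = P * K ^ 3 * (1 - P) := by
      calc _ = P * K ^ 3 * (A (x, t) * P - P) := by noncomm_ring
        _ = _ := by rw [hAP]
    rw [mul_smul_comm, smul_mul_assoc, hinner, ← smul_neg, mul_smul_comm, mul_smul_comm,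
      show (8 : ℝ) = 4 * 2 by norm_num, mul_smul, two_smul]
    congr 1
    noncomm_ring

end RiccatiFlow

theorem hasDerivAt_matrix {𝕜 E m n : Type*} [NontriviallyNormedField 𝕜] [NormedAddCommGroup E]
    [NormedSpace 𝕜 E] [Finite m] [Finite n] {f : 𝕜 → Matrix m n E} {f' : Matrix m n E} {x : 𝕜} :
    HasDerivAt f f' x ↔ ∀ i j, HasDerivAt (fun y => f y i j) (f' i j) x := by
  cases nonempty_fintype m
  cases nonempty_fintype n
  exact hasDerivAt_pi.trans <| forall_congr' fun _ => hasDerivAt_pi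

theorem hasDerivAt_det {𝕜 n : Type*} [NontriviallyNormedField 𝕜] [Fintype n] [DecidableEq n]
    {A : 𝕜 → Matrix n n 𝕜} {A' : Matrix n n 𝕜} {x : 𝕜} (hA : HasDerivAt A A' x) :
    HasDerivAt (fun y => (A y).det) ((A x).adjugate * A').trace x := by
  have hentry := hasDerivAt_matrix.1 hA
  have hprod (σ : Equiv.Perm n) := HasDerivAt.fun_finsetProd (u := Finset.univ)
    fun i _ => hentry (σ i) i
  have hcol (i : n) : ((A x).adjugate * A') i i =
      ∑ σ : Equiv.Perm n, (Equiv.Perm.sign σ : 𝕜) *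
        ((∏ j ∈ Finset.univ.erase i, A x (σ j) j) * A' (σ i) i) := by
    calc ((A x).adjugate * A') i i = ((A x).updateCol i (A'.col i)).det := by
          rw [← cramer_apply, cramer_eq_adjugate_mulVec]; rfl
      _ = _ := by
          rw [det_apply']
          refine Finset.sum_congr rfl fun σ _ => ?_
          rw [← Finset.prod_erase_mul _ _ (Finset.mem_univ i), updateCol_self]
          congr 2
          exact Finset.prod_congr rfl fun j hj => updateCol_ne (Finset.ne_of_mem_erase hj)
  simp only [det_apply', trace, diag_apply, hcol]
  rw [Finset.sum_comm]
  simp only [← Finset.mul_sum]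
  exact HasDerivAt.fun_sum fun σ _ => (hprod σ).const_mul _

theorem contDiff_det {𝕜 E n : Type*} [NontriviallyNormedField 𝕜] [NormedAddCommGroup E]
    [NormedSpace 𝕜 E] [Fintype n] [DecidableEq n] {k : WithTop ℕ∞} {A : E → Matrix n n 𝕜}
    (hA : ∀ i j, ContDiff 𝕜 k fun p => A p i j) : ContDiff 𝕜 k fun p => (A p).det := by
  simp only [det_apply']
  exact ContDiff.sum fun σ _ => contDiff_const.mul (contDiff_prod fun i _ => hA _ _)

open scoped MatrixOrder ComplexOrder Matrix.Norms.L2Operator in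
theorem det_one_add_mul_pos_of_posSemidef {𝕜 n : Type*} [RCLike 𝕜] [Fintype n] [DecidableEq n]
    {A B : Matrix n n 𝕜} (hA : A.PosSemidef) (hB : B.PosSemidef) : 0 < (1 + A * B).det := by
  obtain ⟨C, rfl⟩ := CStarAlgebra.nonneg_iff_eq_star_mul_self.mp hA.nonneg
  rw [mul_assoc, det_one_add_mul_comm]
  exact (PosDef.one.add_posSemidef (hB.mul_mul_conjTranspose_same C)).det_pos

theorem posSemidef_exp_div_add {n : Type*} [Finite n] {κ : n → ℝ} (hκ : ∀ i, 0 < κ i) (x : ℝ) :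
    (of fun i j => exp (-(κ j + κ i) * x) / (κ j + κ i)).PosSemidef := by
  cases nonempty_fintype n
  have hneg i j : -(κ j + κ i) < 0 := neg_lt_zero.2 (add_pos (hκ j) (hκ i))
  have hherm : (of fun i j => exp (-(κ j + κ i) * x) / (κ j + κ i)).IsHermitian :=
    .ext fun i j => by simp only [of_apply, star_trivial, add_comm (κ i)]
  refine .of_dotProduct_mulVec_nonneg hherm fun v => ?_
  have hint i j : MeasureTheory.IntegrableOn
      (fun s => v i * v j * exp (-(κ j + κ i) * s)) (Set.Ioi x) :=
    (integrableOn_exp_mul_Ioi (hneg i j) x).const_mul _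
  calc 0 ≤ ∫ s in Set.Ioi x, (∑ i, v i * exp (-κ i * s)) ^ 2 :=
        MeasureTheory.integral_nonneg fun s => sq_nonneg _
    _ = ∫ s in Set.Ioi x, ∑ i, ∑ j, v i * v j * exp (-(κ j + κ i) * s) := by
        congr 1 with s
        simp only [sq, Finset.sum_mul_sum, neg_add, add_mul, exp_add]
        exact Finset.sum_congr rfl fun i _ => Finset.sum_congr rfl fun j _ => by ring
    _ = ∑ i, ∑ j, ∫ s in Set.Ioi x, v i * v j * exp (-(κ j + κ i) * s) := by
        rw [MeasureTheory.integral_finsetSum _ fun i _ =>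
          MeasureTheory.integrable_finsetSum _ fun j _ => hint i j]
        exact Finset.sum_congr rfl fun i _ =>
          MeasureTheory.integral_finsetSum _ fun j _ => hint i j
    _ = star v ⬝ᵥ (of fun i j => exp (-(κ j + κ i) * x) / (κ j + κ i)) *ᵥ v := by
        simp only [MeasureTheory.integral_const_mul, integral_exp_mul_Ioi (hneg _ _), dotProduct,
          mulVec, Finset.mul_sum, of_apply, neg_div_neg_eq, star_trivial]
        exact Finset.sum_congr rfl fun i _ => Finset.sum_congr rfl fun j _ => by ring

theorem trace_vecMulVec_sq {S n : Type*} [CommSemiring S] [Fintype n] [DecidableEq n]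
    (a b : n → S) : (vecMulVec a b ^ 2).trace = (vecMulVec a b).trace ^ 2 := by
  rw [pow_two, vecMulVec_mul_vecMulVec, trace_vecMulVec, trace_vecMulVec, dotProduct_smul,
    dotProduct_comm b, smul_eq_mul, pow_two]

theorem hasDerivAt_log_det {n : Type*} [Fintype n] [DecidableEq n] {A : ℝ → Matrix n n ℝ}
    {A' : Matrix n n ℝ} {x : ℝ} (hA : HasDerivAt A A' x) (hdet : (A x).det ≠ 0) :
    HasDerivAt (fun y => log (A y).det) ((A x)⁻¹ * A').trace x := by
  refine ((hasDerivAt_det hA).log hdet).congr_deriv ?_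
  rw [inv_def, Ring.inverse_eq_inv', smul_mul, trace_smul, smul_eq_mul, div_eq_inv_mul]

theorem trace_inv_mul_neg_anticommutator {S n : Type*} [CommRing S] [Fintype n] [DecidableEq n]
    {A : Matrix n n S} (hA : IsUnit A.det) (K : Matrix n n S) :
    (A⁻¹ * -(K * (A - 1) + (A - 1) * K)).trace = (K * (2 * A⁻¹ - 1)).trace - K.trace := by
  have hPA := nonsing_inv_mul A hA
  have hcyc : (A⁻¹ * (K * A)).trace = K.trace := by
    rw [trace_mul_comm, mul_assoc, mul_nonsing_inv A hA, mul_one]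
  calc (A⁻¹ * -(K * (A - 1) + (A - 1) * K)).trace
      = (2 * (A⁻¹ * K) - A⁻¹ * (K * A) - A⁻¹ * A * K).trace := by congr 1; noncomm_ring
    _ = (2 * (K * A⁻¹) - K).trace - K.trace := by
        simp only [two_mul, trace_sub, trace_add, hPA, one_mul, hcyc, trace_mul_comm A⁻¹]
    _ = _ := by
        congr 2
        noncomm_ring

section HirotaMatrix

variable {ι : Type*} [Fintype ι] [DecidableEq ι] (c κ : ι → ℝ)

/-- The matrix `A(x,t)` at `p = (x,t)`, factored as `1 + D(t) G(x)` with `D` the diagonal matrix of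
entries `c_n² e^{8κ_n³t}` and `G` the Gram matrix of the functions `e^{-κ_n s}` on `(x, ∞)`. -/
noncomputable def hirotaMatrix (p : ℝ × ℝ) : Matrix ι ι ℝ :=
  1 + diagonal (fun n => c n ^ 2 * exp (8 * κ n ^ 3 * p.2)) *
    of fun n m => exp (-(κ m + κ n) * p.1) / (κ m + κ n)

/-- The solution `M = K (2 A⁻¹ - 1)`, `K = diag κ`, of the operator Riccati flow. For a single
soliton this is `κ (1 - a) / (1 + a)` with `A = 1 + a`, a hyperbolic tangent since `a` is an
exponential. -/
noncomputable def hirotaRiccati (p : ℝ × ℝ) : Matrix ι ι ℝ :=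
  diagonal κ * (2 * (hirotaMatrix c κ p)⁻¹ - 1)

theorem hirotaMatrix_apply (p : ℝ × ℝ) (n m : ι) :
    hirotaMatrix c κ p n m = (if n = m then 1 else 0) +
      c n ^ 2 * (exp (-(κ m + κ n) * p.1) / (κ m + κ n)) * exp (8 * κ n ^ 3 * p.2) := by
  simp only [hirotaMatrix, Matrix.add_apply, one_apply, diagonal_mul, of_apply]
  ring

theorem hasDerivAt_hirotaMatrix_fst (x t : ℝ) :
    HasDerivAt (fun y => hirotaMatrix c κ (y, t))
      (-(diagonal κ * (hirotaMatrix c κ (x, t) - 1) +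
        (hirotaMatrix c κ (x, t) - 1) * diagonal κ)) x := by
  refine hasDerivAt_matrix.2 fun n m => ?_
  simp only [hirotaMatrix_apply]
  refine (((((hasDerivAt_id x).const_mul (-(κ m + κ n))).exp.div_const (κ m + κ n)).const_mul
    (c n ^ 2)).mul_const (exp (8 * κ n ^ 3 * t)) |>.const_add _).congr_deriv ?_
  simp only [Matrix.neg_apply, Matrix.add_apply, Matrix.sub_apply, diagonal_mul, mul_diagonal,
    one_apply, hirotaMatrix_apply, id_eq]
  ring

theorem hasDerivAt_hirotaMatrix_snd (x t : ℝ) :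
    HasDerivAt (fun s => hirotaMatrix c κ (x, s))
      ((8 : ℝ) • (diagonal κ ^ 3 * (hirotaMatrix c κ (x, t) - 1))) t := by
  refine hasDerivAt_matrix.2 fun n m => ?_
  simp only [hirotaMatrix_apply]
  refine (((hasDerivAt_id t).const_mul (8 * κ n ^ 3)).exp.const_mul
    (c n ^ 2 * (exp (-(κ m + κ n) * x) / (κ m + κ n))) |>.const_add _).congr_deriv ?_
  simp only [Matrix.smul_apply, Matrix.sub_apply, diagonal_pow, Pi.pow_apply, diagonal_mul,
    one_apply, hirotaMatrix_apply, smul_eq_mul, id_eq]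
  ring

variable {κ}

theorem diagonal_mul_hirotaMatrix_add (hκ : ∀ n m, κ n + κ m ≠ 0) (p : ℝ × ℝ) :
    diagonal κ * (hirotaMatrix c κ p - 1) + (hirotaMatrix c κ p - 1) * diagonal κ =
      vecMulVec (fun n => c n ^ 2 * exp (8 * κ n ^ 3 * p.2) * exp (-κ n * p.1))
        fun m => exp (-κ m * p.1) := by
  ext n m
  have hne := hκ m n
  simp only [Matrix.add_apply, Matrix.sub_apply, diagonal_mul, mul_diagonal, one_apply,
    hirotaMatrix_apply, vecMulVec_apply, neg_add, add_mul, exp_add]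
  field_simp
  ring

theorem det_hirotaMatrix_pos (hκ : ∀ n, 0 < κ n) (p : ℝ × ℝ) : 0 < (hirotaMatrix c κ p).det :=
  det_one_add_mul_pos_of_posSemidef (.diagonal fun n => by positivity)
    (posSemidef_exp_div_add hκ p.1)

theorem contDiff_log_det_hirotaMatrix (hκ : ∀ n, 0 < κ n) {k : WithTop ℕ∞} :
    ContDiff ℝ k fun p => log (hirotaMatrix c κ p).det := by
  refine (contDiff_det fun n m => ?_).log fun p => (det_hirotaMatrix_pos c hκ p).ne'
  simp only [hirotaMatrix_apply]
  fun_prop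

open scoped Matrix.Norms.Operator in
theorem isRiccatiFlow_hirotaRiccati (hκ : ∀ n, 0 < κ n) :
    IsRiccatiFlow (diagonal κ) (hirotaRiccati c κ) := by
  have hunit (p) : IsUnit (hirotaMatrix c κ p) :=
    (isUnit_iff_isUnit_det _).2 (det_hirotaMatrix_pos c hκ p).ne'.isUnit
  simpa only [hirotaRiccati, ← nonsing_inv_eq_ringInverse] using!
    isRiccatiFlow_of_linear_flow hunit (hasDerivAt_hirotaMatrix_fst c κ)
      (hasDerivAt_hirotaMatrix_snd c κ)

theorem trace_sq_sub_hirotaRiccati_sq (hκ : ∀ n, 0 < κ n) (p : ℝ × ℝ) :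
    ((diagonal κ ^ 2 - hirotaRiccati c κ p ^ 2) ^ 2).trace =
      (diagonal κ ^ 2 - hirotaRiccati c κ p ^ 2).trace ^ 2 := by
  have hunit := (det_hirotaMatrix_pos c hκ p).ne'.isUnit
  rw [hirotaRiccati,
    sq_sub_mul_two_mul_inv_sub_one_sq (nonsing_inv_mul _ hunit) (mul_nonsing_inv _ hunit),
    diagonal_mul_hirotaMatrix_add c (fun n m => (add_pos (hκ n) (hκ m)).ne'), mul_vecMulVec,
    vecMulVec_mul, mul_vecMulVec, mul_vecMulVec, trace_vecMulVec_sq]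

theorem pderivX_log_det_hirotaMatrix (hκ : ∀ n, 0 < κ n) :
    pderivX (fun p => log (hirotaMatrix c κ p).det) =
      fun p => (hirotaRiccati c κ p).trace - (diagonal κ).trace := by
  refine pderivX_eq fun x t => (hasDerivAt_log_det (hasDerivAt_hirotaMatrix_fst c κ x t)
    (det_hirotaMatrix_pos c hκ _).ne').congr_deriv ?_
  exact trace_inv_mul_neg_anticommutator (det_hirotaMatrix_pos c hκ (x, t)).ne'.isUnit (diagonal κ)

/-- The potential `-2 tr M` of the soliton, whose `x`-derivative is `-2 ∂ₓ² log det A`. -/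
noncomputable def hirotaPotential (c κ : ι → ℝ) (p : ℝ × ℝ) : ℝ :=
  -2 * (hirotaRiccati c κ p).trace

theorem contDiff_hirotaPotential (hκ : ∀ n, 0 < κ n) {k : WithTop ℕ∞} :
    ContDiff ℝ k (hirotaPotential c κ) := by
  have hdlog : ContDiff ℝ k fun p => (hirotaRiccati c κ p).trace - (diagonal κ).trace := by
    rw [← pderivX_log_det_hirotaMatrix c hκ]
    exact contDiff_pderivX (contDiff_log_det_hirotaMatrix c hκ) le_rfl
  have htrace := hdlog.add (contDiff_const (c := (diagonal κ).trace))
  simp only [sub_add_cancel] at htrace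
  exact contDiff_const.mul htrace

theorem pderivX_hirotaPotential (hκ : ∀ n, 0 < κ n) :
    pderivX (hirotaPotential c κ) =
      fun p => -2 * pderivX (pderivX fun q => log (hirotaMatrix c κ q).det) p := by
  rw [pderivX_log_det_hirotaMatrix c hκ]
  funext p
  simp only [hirotaPotential, pderivX, deriv_sub_const, deriv_const_mul_field]

open scoped Matrix.Norms.Operator in
theorem hirotaPotential_potential_kdv (hκ : ∀ n, 0 < κ n) (p : ℝ × ℝ) :
    pderivT (hirotaPotential c κ) p - 3 * pderivX (hirotaPotential c κ) p ^ 2 +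
      pderivX (pderivX (pderivX (hirotaPotential c κ))) p = 0 :=
  (isRiccatiFlow_hirotaRiccati c hκ).potential_kdv
    (τ := (traceLinearMap ι ℝ ℝ).toContinuousLinearMap) trace_mul_comm
    (trace_sq_sub_hirotaRiccati_sq c hκ) p

theorem hirota_N_soliton_solves_KdV_general (hκ : ∀ i, 0 < κ i)
    (A : ℝ → ℝ → Matrix ι ι ℝ)
    (hA : ∀ x t, A x t = of fun n m =>
      (if n = m then 1 else 0) +
        c n ^ 2 * (exp (-(κ m + κ n) * x) / (κ m + κ n)) * exp (8 * κ n ^ 3 * t))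
    (u : ℝ × ℝ → ℝ)
    (hu : u = fun p => -2 * pderivX (pderivX fun q => log (A q.1 q.2).det) p) :
    (∀ x t, 0 < (A x t).det) ∧ ContDiff ℝ (⊤ : ℕ∞) u ∧
      ∀ p, pderivT u p - 6 * u p * pderivX u p + pderivX (pderivX (pderivX u)) p = 0 := by
  obtain rfl : A = fun x t => hirotaMatrix c κ (x, t) := by
    ext x t n m
    rw [hA, of_apply, hirotaMatrix_apply]
  obtain rfl : u = pderivX (hirotaPotential c κ) := hu.trans (pderivX_hirotaPotential c hκ).symm
  exact ⟨fun x t => det_hirotaMatrix_pos c hκ (x, t),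
    contDiff_pderivX (contDiff_hirotaPotential c hκ) le_rfl,
    kdv_of_potential_kdv (contDiff_hirotaPotential c hκ) (hirotaPotential_potential_kdv c hκ)⟩

end HirotaMatrix

/-- For the Hirota matrix `A_{nm}(x,t) = δ_{nm} + c_n² e^{−(κ_m+κ_n)x}/(κ_m+κ_n) · e^{8κ_n³ t}`
one has `det A(x,t) > 0`, and `u = −2 ∂_x² log det A` is smooth and solves
`u_t − 6 u u_x + u_{xxx} = 0` (the N-soliton solution). -/
theorem hirota_N_soliton_solves_KdV
    (N : ℕ) (hN : 1 ≤ N) (c κ : Fin N → ℝ)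
    (hc : ∀ i, 0 < c i) (hκ : ∀ i, 0 < κ i) (hκ' : Function.Injective κ)
    (A : ℝ → ℝ → Matrix (Fin N) (Fin N) ℝ)
    (hA : ∀ x t, A x t = Matrix.of fun n m =>
      (if n = m then (1 : ℝ) else 0) +
        c n ^ 2 * (Real.exp (-(κ m + κ n) * x) / (κ m + κ n)) *
          Real.exp (8 * κ n ^ 3 * t))
    (u : ℝ × ℝ → ℝ)
    (hu : u = fun p =>
      -2 * pderivX (pderivX (fun q => Real.log (A q.1 q.2).det)) p) :
    (∀ x t : ℝ, 0 < (A x t).det) ∧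
    ContDiff ℝ (⊤ : ℕ∞) u ∧
    (∀ p : ℝ × ℝ,
      pderivT u p - 6 * u p * pderivX u p + pderivX (pderivX (pderivX u)) p = 0) :=
  hirota_N_soliton_solves_KdV_general c hκ A hA u hu
end
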